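/- arXiv:1710.03635 — 2 statements merged into one kernel-verified Lean document; each statement's English description precedes it below -/
import Mathlib

section
/- Let p be a prime and let k₁ ⊆ k₂ be an extension of fields of characteristic p such that the algebraic closure of k₁ in k₂ is a separable extension of k₁. Write F₁ = k₁((t)) ⊆ F₂ = k₂((t)). Let α ∈ k₂ be an element that is transcendental over k₁, and set E := F₂[Y]/(Y^p − Y − α·t^{−1}). Then E is a Galois field extension of F₂ of degree p, and E is not induced by any degree p field extension of F₁: there is no field extension E₁ of F₁ with [E₁ : F₁] = p such that E₁ ⊗_{F₁} F₂ is isomorphic to E as an F₂-algebra. -/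
open Polynomial

open scoped TensorProduct

attribute [local instance] Algebra.TensorProduct.rightAlgebra

/-- The ring homomorphism `k₁((t)) →+* k₂((t))` applying a ring homomorphism
`f : k₁ →+* k₂` to each coefficient of a Laurent series. -/
noncomputable def lsMap {R S : Type*} [CommRing R] [CommRing S]
    (f : R →+* S) : LaurentSeries R →+* LaurentSeries S where
  toFun x := x.map f
  map_one' := by ext g; by_cases h : g = 0 <;> simp [h]
  map_mul' x y := HahnSeries.map_mul f.toNonUnitalRingHom
  map_zero' := by ext g; simp
  map_add' x y := HahnSeries.map_add f.toAddMonoidHom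

/-!
Let `E` be the extension of `k₂((t))` obtained by adjoining a root of `Y ^ p - Y - α / t`. Because
`α` is transcendental over `k₁`, there are two embeddings `σ`, `τ` of `k₂` into a field `K` that
agree on `k₁` and satisfy `σ α = τ α + 1`. If `E` were induced from `k₁((t))`, then its base changes
along `σ` and `τ` to `K((t))` would coincide, so the Artin–Schreier extension of `K((t))` given by
`σ α / t` would also contain a root of `Y ^ p - Y - τ α / t`. By Artin–Schreier theory
`τ α / t - n * (σ α / t)` has the form `c ^ p - c` for some integer `n`. A simple pole is not of
this form, so `τ α = n * σ α`, which contradicts `σ α = τ α + 1` since `α` is transcendental.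
-/

section ArtinSchreier

/-- The Artin–Schreier polynomial `X ^ p - X - a`, reducible so that it is interchangeable with the
explicit polynomial. -/
noncomputable abbrev artinSchreierPoly {R : Type*} [CommRing R] (p : ℕ) (a : R) : R[X] :=
  X ^ p - X - C a

theorem map_artinSchreierPoly {R S : Type*} [CommRing R] [CommRing S] (p : ℕ) (a : R)
    (f : R →+* S) : (artinSchreierPoly p a).map f = artinSchreierPoly p (f a) := by
  simp

theorem isRoot_artinSchreierPoly {R : Type*} [CommRing R] {p : ℕ} {a y : R} :
    (artinSchreierPoly p a).IsRoot y ↔ y ^ p - y = a := by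
  simp [sub_eq_zero]

theorem adjoinRoot_root_pow_sub_root {R : Type*} [CommRing R] (p : ℕ) (a : R) :
    AdjoinRoot.root (artinSchreierPoly p a) ^ p - AdjoinRoot.root (artinSchreierPoly p a) =
      AdjoinRoot.of (artinSchreierPoly p a) a := by
  rw [← isRoot_artinSchreierPoly, ← map_artinSchreierPoly]
  exact AdjoinRoot.isRoot_root _

theorem sub_mem_bot_of_pow_sub_eq {K : Type*} [Field K] (p : ℕ) [Fact p.Prime] [CharP K p]
    {y z : K} (h : y ^ p - y = z ^ p - z) : y - z ∈ (⊥ : Subfield K) := by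
  rw [Subfield.mem_bot_iff_pow_eq_self K p, sub_pow_char]
  linear_combination h

section CommRing

variable {R : Type*} [CommRing R] {p : ℕ}

theorem natDegree_artinSchreierPoly [Nontrivial R] (hp : 1 < p) (a : R) :
    (artinSchreierPoly p a).natDegree = p := by
  rw [natDegree_sub_C, natDegree_sub_eq_left_of_natDegree_lt (by simpa), natDegree_X_pow]

theorem monic_artinSchreierPoly [Nontrivial R] (hp : 1 < p) (a : R) :
    (artinSchreierPoly p a).Monic := by
  rw [artinSchreierPoly, sub_sub]
  exact monic_X_pow_sub (by rw [degree_X_add_C]; exact_mod_cast hp)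

theorem finrank_adjoinRoot_artinSchreierPoly [Nontrivial R] (hp : 1 < p) (a : R) :
    Module.finrank R (AdjoinRoot (artinSchreierPoly p a)) = p := by
  rw [PowerBasis.finrank (AdjoinRoot.powerBasis' (monic_artinSchreierPoly hp a)),
    AdjoinRoot.powerBasis'_dim, natDegree_artinSchreierPoly hp]

theorem separable_artinSchreierPoly [CharP R p] (a : R) : (artinSchreierPoly p a).Separable := by
  have hderiv : derivative (artinSchreierPoly p a) = -1 := by simp [derivative_X_pow]
  rw [separable_def, hderiv]
  exact isCoprime_one_right.neg_right

theorem artinSchreierPoly_eq_comp_X_sub_C [Fact p.Prime] [CharP R p] {a y : R}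
    (hy : y ^ p - y = a) : artinSchreierPoly p a = (X ^ p - X : R[X]).comp (X - C y) := by
  simp only [artinSchreierPoly, sub_comp, pow_comp, X_comp, sub_pow_char, ← hy, map_sub, map_pow]
  ring

end CommRing

variable {L : Type*} [Field L] {p : ℕ} [hp : Fact p.Prime] [CharP L p] {a : L}

theorem splits_artinSchreierPoly {y : L} (hy : y ^ p - y = a) :
    (artinSchreierPoly p a).Splits := by
  rw [artinSchreierPoly_eq_comp_X_sub_C hy]
  have hsplits : (X ^ p - X : L[X]).Splits := by
    simpa using (Subfield.splits_bot L p).map (Subfield.subtype _)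
  exact hsplits.comp_X_sub_C y

theorem natDegree_mul_mem_fieldRange_of_dvd {M : Type*} [Field M] [Algebra L M] {q : L[X]}
    (hq : q.Monic) (hdvd : q ∣ artinSchreierPoly p a) {y : M} (hy : y ^ p - y = algebraMap L M a) :
    (q.natDegree : M) * y ∈ (algebraMap L M).fieldRange := by
  have : CharP M p := charP_of_injective_algebraMap (algebraMap L M).injective p
  have hdvd' : q.map (algebraMap L M) ∣ artinSchreierPoly p (algebraMap L M a) :=
    map_artinSchreierPoly p a (algebraMap L M) ▸ Polynomial.map_dvd _ hdvd
  have hsplits : (q.map (algebraMap L M)).Splits :=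
    (splits_artinSchreierPoly hy).of_dvd (monic_artinSchreierPoly hp.out.one_lt _).ne_zero hdvd'
  -- The roots of `q` differ from `y` by elements of the prime field, so their sum, which lies in
  -- `L`, is `q.natDegree * y` up to an element of the prime field.
  set s := (q.map (algebraMap L M)).roots
  have hsub : (s.map (· - y)).sum ∈ (algebraMap L M).fieldRange := by
    refine Subfield.multiset_sum_mem _ _ fun w hw ↦ ?_
    obtain ⟨z, hz, rfl⟩ := Multiset.mem_map.1 hw
    have hzroot := isRoot_artinSchreierPoly.1 ((isRoot_of_mem_roots hz).dvd hdvd')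
    exact (bot_le : ⊥ ≤ (algebraMap L M).fieldRange)
      (sub_mem_bot_of_pow_sub_eq p (hzroot.trans hy.symm))
  have hsum : s.sum ∈ (algebraMap L M).fieldRange :=
    ⟨-q.nextCoeff, by
      rw [map_neg, ← nextCoeff_map_eq, hsplits.nextCoeff_eq_neg_sum_roots_of_monic (hq.map _),
        neg_neg]⟩
  have hcard : s.card = q.natDegree := by
    rw [← hsplits.natDegree_eq_card_roots, natDegree_map]
  have hmul : (q.natDegree : M) * y = s.sum - (s.map (· - y)).sum := by
    simp [Multiset.sum_map_sub, hcard]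
  exact hmul ▸ sub_mem hsum hsub

theorem dvd_natDegree_of_dvd_artinSchreierPoly (h : ∀ b : L, b ^ p - b ≠ a) {q : L[X]}
    (hq : q.Monic) (hdvd : q ∣ artinSchreierPoly p a) : p ∣ q.natDegree := by
  have hdegree : (artinSchreierPoly p (algebraMap L (AlgebraicClosure L) a)).degree ≠ 0 :=
    (natDegree_pos_iff_degree_pos.1
      (by rw [natDegree_artinSchreierPoly hp.out.one_lt]; exact hp.out.pos)).ne'
  obtain ⟨y, hy⟩ := IsAlgClosed.exists_root _ hdegree
  rw [isRoot_artinSchreierPoly] at hy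
  by_contra hndvd
  have hdeg : (q.natDegree : AlgebraicClosure L) ≠ 0 := by
    rw [← map_natCast (algebraMap L _), _root_.map_ne_zero, Ne, CharP.cast_eq_zero_iff L p]
    exact hndvd
  obtain ⟨b, rfl⟩ : y ∈ (algebraMap L (AlgebraicClosure L)).fieldRange := by
    rw [← mul_div_cancel_left₀ y hdeg]
    exact div_mem (natDegree_mul_mem_fieldRange_of_dvd hq hdvd hy) (natCast_mem _ _)
  exact h b ((algebraMap L (AlgebraicClosure L)).injective (by simpa using hy))

theorem irreducible_artinSchreierPoly (h : ∀ b : L, b ^ p - b ≠ a) :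
    Irreducible (artinSchreierPoly p a) := by
  have hmonic := monic_artinSchreierPoly hp.out.one_lt a
  have hne : artinSchreierPoly p a ≠ 1 := fun h1 ↦
    hp.out.ne_zero (by rw [← natDegree_artinSchreierPoly hp.out.one_lt a, h1, natDegree_one])
  refine (hmonic.irreducible_iff_natDegree').2 ⟨hne, fun f g _ hg hfg hmem ↦ ?_⟩
  rw [natDegree_artinSchreierPoly hp.out.one_lt, Finset.mem_Ioc] at hmem
  have hle : p ≤ g.natDegree := Nat.le_of_dvd hmem.1
    (dvd_natDegree_of_dvd_artinSchreierPoly h hg (Dvd.intro_left f hfg))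
  have := hp.out.pos
  omega

theorem isGalois_adjoinRoot_artinSchreierPoly [Fact (Irreducible (artinSchreierPoly p a))] :
    IsGalois L (AdjoinRoot (artinSchreierPoly p a)) := by
  let f := artinSchreierPoly p a
  have : CharP (AdjoinRoot f) p :=
    charP_of_injective_algebraMap (algebraMap L (AdjoinRoot f)).injective p
  have hroot : AdjoinRoot.root f ∈ f.rootSet (AdjoinRoot f) :=
    mem_rootSet.2 ⟨(monic_artinSchreierPoly hp.out.one_lt a).ne_zero, AdjoinRoot.eval₂_root f⟩
  have : IsSplittingField L (AdjoinRoot f) f :=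
    { splits' := by
        rw [map_artinSchreierPoly]
        exact splits_artinSchreierPoly (adjoinRoot_root_pow_sub_root p a)
      adjoin_rootSet' := top_le_iff.1 <| AdjoinRoot.adjoinRoot_eq_top (f := f) ▸
        Algebra.adjoin_mono (Set.singleton_subset_iff.2 hroot) }
  exact IsGalois.of_separable_splitting_field (separable_artinSchreierPoly a)

theorem exists_sub_intCast_mul_mem_range_algebraMap {E : Type*} [Field E] [Algebra L E]
    [IsGalois L E] [IsCyclic Gal(E/L)] {y z : E} {b : L} (hy : y ^ p - y = algebraMap L E a)
    (hyL : y ∉ Set.range (algebraMap L E)) (hz : z ^ p - z = algebraMap L E b) :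
    ∃ n : ℤ, z - n * y ∈ Set.range (algebraMap L E) := by
  have : CharP E p := charP_of_injective_algebraMap (algebraMap L E).injective p
  obtain ⟨g, hg⟩ := IsCyclic.exists_generator (α := Gal(E/L))
  have mem_range_of_fixed {x : E} (hx : g x = x) : x ∈ Set.range (algebraMap L E) :=
    (InfiniteGalois.mem_range_algebraMap_iff_fixed x).2 fun σ ↦
      (Subgroup.zpowers_le (H := MulAction.stabilizer Gal(E/L) x)).2 hx (hg σ)
  have sub_mem_bot {x : E} {c : L} (hx : x ^ p - x = algebraMap L E c) :
      g x - x ∈ (⊥ : Subfield E) :=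
    sub_mem_bot_of_pow_sub_eq p (by rw [← map_pow, ← map_sub, hx, g.commutes])
  have hgy : g y - y ≠ 0 := fun h ↦ hyL (mem_range_of_fixed (sub_eq_zero.1 h))
  obtain ⟨n, hn⟩ := (mem_bot_iff_intCast p E).1 (div_mem (sub_mem_bot hz) (sub_mem_bot hy))
  refine ⟨n, mem_range_of_fixed ?_⟩
  rw [eq_div_iff hgy] at hn
  rw [map_sub, map_mul, map_intCast]
  linear_combination -hn

theorem exists_pow_sub_eq_of_adjoinRoot (h : ∀ c : L, c ^ p - c ≠ a) {b : L}
    {z : AdjoinRoot (artinSchreierPoly p a)} (hz : z ^ p - z = AdjoinRoot.of _ b) :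
    ∃ (n : ℤ) (c : L), c ^ p - c = b - n * a := by
  let f := artinSchreierPoly p a
  have : Fact (Irreducible f) := ⟨irreducible_artinSchreierPoly h⟩
  have : IsGalois L (AdjoinRoot f) := isGalois_adjoinRoot_artinSchreierPoly
  have : FiniteDimensional L (AdjoinRoot f) :=
    (monic_artinSchreierPoly hp.out.one_lt a).finite_adjoinRoot
  have : CharP (AdjoinRoot f) p :=
    charP_of_injective_algebraMap (algebraMap L (AdjoinRoot f)).injective p
  have : IsCyclic Gal(AdjoinRoot f/L) := isCyclic_of_prime_card (p := p) <| by
    rw [IsGalois.card_aut_eq_finrank, finrank_adjoinRoot_artinSchreierPoly hp.out.one_lt]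
  have hy := adjoinRoot_root_pow_sub_root p a
  have hyL : AdjoinRoot.root f ∉ Set.range (algebraMap L (AdjoinRoot f)) := by
    rintro ⟨c, hc⟩
    refine h c ((AdjoinRoot.of f).injective ?_)
    rw [← hy, ← hc, map_sub, map_pow, AdjoinRoot.algebraMap_eq]
  obtain ⟨n, c, hc⟩ := exists_sub_intCast_mul_mem_range_algebraMap hy hyL hz
  refine ⟨n, c, (AdjoinRoot.of f).injective ?_⟩
  have hn : (n : AdjoinRoot f) ^ p = n :=
    (Subfield.mem_bot_iff_pow_eq_self _ p).1 (intCast_mem _ n)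
  rw [AdjoinRoot.algebraMap_eq] at hc
  rw [map_sub, map_pow, hc, sub_pow_char, mul_pow, hn, map_sub, map_mul, map_intCast]
  linear_combination hz - (n : AdjoinRoot f) * hy

end ArtinSchreier

section LaurentSeries

theorem charP_laurentSeries (R : Type*) [Ring R] (p : ℕ) [CharP R p] :
    CharP (LaurentSeries R) p :=
  charP_of_injective_ringHom (HahnSeries.C_injective (Γ := ℤ) (R := R)) p

theorem lsMap_single {R S : Type*} [CommRing R] [CommRing S] (f : R →+* S) (n : ℤ) (r : R) :
    lsMap f (HahnSeries.single n r) = HahnSeries.single n (f r) :=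
  HahnSeries.map_single f.toAddMonoidHom.toZeroHom

theorem lsMap_comp {R S T : Type*} [CommRing R] [CommRing S] [CommRing T] (g : S →+* T)
    (f : R →+* S) : lsMap (g.comp f) = (lsMap g).comp (lsMap f) :=
  rfl

theorem eq_zero_of_pow_sub_eq_single_neg_one {R : Type*} [Ring R] [NoZeroDivisors R] {n : ℕ}
    (hn : 2 ≤ n) {b : LaurentSeries R} {c : R}
    (h : b ^ n - b = HahnSeries.single (-1 : ℤ) c) : c = 0 := by
  have hord : (b ^ n).order = n * b.order := by rw [HahnSeries.order_pow, nsmul_eq_mul]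
  have : (2 : ℤ) ≤ n := by exact_mod_cast hn
  have hcoeff (i : ℤ) : (b ^ n).coeff i - b.coeff i = (HahnSeries.single (-1 : ℤ) c).coeff i := by
    rw [← HahnSeries.coeff_sub, h]
  rcases lt_or_ge b.order 0 with hneg | hnonneg
  · have hb : b ^ n ≠ 0 := pow_ne_zero n (by rintro rfl; simp at hneg)
    have hlt : n * b.order < b.order := by nlinarith
    have hlead := hcoeff (b ^ n).order
    rw [HahnSeries.coeff_single_of_ne (by rw [hord]; nlinarith),
      HahnSeries.coeff_eq_zero_of_lt_order (x := b) (by rw [hord]; exact hlt), sub_zero] at hlead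
    exact absurd hlead (HahnSeries.coeff_order_eq_zero.not.2 hb)
  · have hpole := hcoeff (-1)
    rwa [HahnSeries.coeff_single_same,
      HahnSeries.coeff_eq_zero_of_lt_order (by rw [hord]; nlinarith),
      HahnSeries.coeff_eq_zero_of_lt_order (by omega), sub_zero, eq_comm] at hpole

end LaurentSeries

section Embeddings

universe u v

theorem exists_field_amalgam {R : Type*} {A : Type u} {B : Type v} [CommRing R] [Field A] [Field B]
    (f : R →+* A) (g : R →+* B) (hf : Function.Injective f) (hg : Function.Injective g) :
    ∃ (K : Type (max u v)) (_ : Field K) (σ : A →+* K) (τ : B →+* K), σ.comp f = τ.comp g := by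
  algebraize [f, g]
  have := Algebra.TensorProduct.nontrivial_of_algebraMap_injective_of_isDomain R A B hf hg
  obtain ⟨m, hm⟩ := Ideal.exists_maximal (A ⊗[R] B)
  refine ⟨(A ⊗[R] B) ⧸ m, Ideal.Quotient.field m,
    (Ideal.Quotient.mk m).comp Algebra.TensorProduct.includeLeftRingHom,
    (Ideal.Quotient.mk m).comp
      (Algebra.TensorProduct.includeRight : B →ₐ[R] A ⊗[R] B).toRingHom, ?_⟩
  rw [RingHom.comp_assoc, RingHom.comp_assoc]
  exact congrArg _ Algebra.TensorProduct.includeLeftRingHom_comp_algebraMap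

-- Amalgamate `k₂` with itself over `k₁[X]`, where `X` acts as `α` on one side and as `α + 1` on
-- the other.
theorem exists_embeddings_apply_eq_add_one {k₁ : Type*} {k₂ : Type v} [CommRing k₁]
    [Field k₂] [Algebra k₁ k₂] {α : k₂} (hα : Transcendental k₁ α) :
    ∃ (K : Type v) (_ : Field K) (σ τ : k₂ →+* K),
      σ.comp (algebraMap k₁ k₂) = τ.comp (algebraMap k₁ k₂) ∧ σ α = τ α + 1 := by
  have hinj : Function.Injective (aeval α : k₁[X] →ₐ[k₁] k₂) := transcendental_iff_injective.1 hα
  obtain ⟨K, _, σ, τ, h⟩ := exists_field_amalgam (aeval α : k₁[X] →ₐ[k₁] k₂).toRingHom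
    ((aeval α : k₁[X] →ₐ[k₁] k₂).comp (taylorAlgHom 1)).toRingHom hinj
    (hinj.comp (taylor_injective 1))
  refine ⟨K, _, σ, τ, RingHom.ext fun x ↦ ?_, ?_⟩
  · simpa using RingHom.congr_fun h (C x)
  · simpa using RingHom.congr_fun h X

theorem exists_ringHom_comp_algebraMap_eq_of_baseChange {F₁ F₂ E₁ E M : Type*} [CommSemiring F₁]
    [CommSemiring F₂] [Semiring E₁] [Semiring E] [CommSemiring M] [Algebra F₁ F₂]
    [Algebra F₁ E₁] [Algebra F₂ E]
    (e : (E₁ ⊗[F₁] F₂) ≃ₐ[F₂] E) (u : E →+* M) (v : F₂ →+* M)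
    (huv : (u.comp (algebraMap F₂ E)).comp (algebraMap F₁ F₂) = v.comp (algebraMap F₁ F₂)) :
    ∃ Φ : E →+* M, Φ.comp (algebraMap F₂ E) = v := by
  let : Algebra F₁ M := (v.comp (algebraMap F₁ F₂)).toAlgebra
  let i : E₁ →+* E := (e : (E₁ ⊗[F₁] F₂) →+* E).comp Algebra.TensorProduct.includeLeftRingHom
  have hi (r : F₁) : i (algebraMap F₁ E₁ r) = algebraMap F₂ E (algebraMap F₁ F₂ r) := by
    rw [← e.commutes]
    exact congrArg e
      (RingHom.congr_fun Algebra.TensorProduct.includeLeftRingHom_comp_algebraMap r)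
  let uE₁ : E₁ →ₐ[F₁] M :=
    { u.comp i with commutes' := fun r ↦ (congrArg u (hi r)).trans (RingHom.congr_fun huv r) }
  let vF₂ : F₂ →ₐ[F₁] M := { v with commutes' := fun _ ↦ rfl }
  let φ : E₁ ⊗[F₁] F₂ →ₐ[F₁] M := Algebra.TensorProduct.lift uE₁ vF₂ fun _ _ ↦ Commute.all _ _
  refine ⟨φ.toRingHom.comp (e.symm : E →+* E₁ ⊗[F₁] F₂), RingHom.ext fun x ↦ ?_⟩
  change φ (e.symm (algebraMap F₂ E x)) = vF₂ x
  rw [e.symm.commutes, Algebra.TensorProduct.right_algebraMap_apply,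
    Algebra.TensorProduct.lift_tmul, map_one, one_mul]

theorem ne_intCast_mul_add_one_of_transcendental {R A : Type*} [CommRing R] [Nontrivial R] [Ring A]
    [Algebra R A] {α : A} (hα : Transcendental R α) (n : ℤ) : α ≠ n * (α + 1) := by
  intro h
  refine hα ⟨X - C (n : R) * (X + 1), fun h0 ↦ ?_, by simp [← h]⟩
  simpa using congrArg (eval (-1)) h0

end Embeddings

section Descent

variable {p : ℕ} [hp : Fact p.Prime]

theorem exists_eq_intCast_mul_of_adjoinRoot_single {K : Type*} [Field K] [CharP K p] {a b : K}
    (ha : a ≠ 0) {z : AdjoinRoot (artinSchreierPoly p (HahnSeries.single (-1 : ℤ) a))}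
    (hz : z ^ p - z = AdjoinRoot.of _ (HahnSeries.single (-1) b)) : ∃ n : ℤ, b = n * a := by
  have := charP_laurentSeries K p
  have hroot (c : LaurentSeries K) : c ^ p - c ≠ HahnSeries.single (-1) a :=
    fun h ↦ ha (eq_zero_of_pow_sub_eq_single_neg_one hp.out.two_le h)
  obtain ⟨n, c, hc⟩ := exists_pow_sub_eq_of_adjoinRoot hroot hz
  refine ⟨n, sub_eq_zero.1 (eq_zero_of_pow_sub_eq_single_neg_one hp.out.two_le (hc.trans ?_))⟩
  rw [HahnSeries.single_sub, ← zsmul_eq_mul, ← zsmul_eq_mul]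
  congr 1
  exact (map_zsmul (HahnSeries.single.addMonoidHom (-1 : ℤ)) n a).symm

theorem exists_eq_intCast_mul_of_baseChange {k₁ k₂ K E₁ : Type*} [CommRing k₁] [Field k₂] [Field K]
    [CharP K p] [Algebra k₁ k₂] {α : k₂} (hα : α ≠ 0) {σ τ : k₂ →+* K}
    (hστ : σ.comp (algebraMap k₁ k₂) = τ.comp (algebraMap k₁ k₂))
    [Semiring E₁] [Algebra (LaurentSeries k₁) E₁] :
    letI : Algebra (LaurentSeries k₁) (LaurentSeries k₂) :=
      (lsMap (algebraMap k₁ k₂)).toAlgebra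
    ((E₁ ⊗[LaurentSeries k₁] LaurentSeries k₂) ≃ₐ[LaurentSeries k₂]
      AdjoinRoot (artinSchreierPoly p (HahnSeries.single (-1 : ℤ) α))) →
    ∃ n : ℤ, τ α = n * σ α := by
  intro e
  let : Algebra (LaurentSeries k₁) (LaurentSeries k₂) := (lsMap (algebraMap k₁ k₂)).toAlgebra
  let f := artinSchreierPoly p (HahnSeries.single (-1 : ℤ) α)
  let fσ := artinSchreierPoly p (HahnSeries.single (-1 : ℤ) (σ α))
  have hfσ : f.map (lsMap σ) = fσ := by rw [map_artinSchreierPoly, lsMap_single]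
  let u : AdjoinRoot f →+* AdjoinRoot fσ := AdjoinRoot.map (lsMap σ) f fσ hfσ.symm.dvd
  let v : LaurentSeries k₂ →+* AdjoinRoot fσ := (AdjoinRoot.of fσ).comp (lsMap τ)
  have huv : (u.comp (AdjoinRoot.of f)).comp (lsMap (algebraMap k₁ k₂)) =
      v.comp (lsMap (algebraMap k₁ k₂)) := by
    have hu : u.comp (AdjoinRoot.of f) = (AdjoinRoot.of fσ).comp (lsMap σ) :=
      RingHom.ext fun x ↦ AdjoinRoot.map_of (lsMap σ) f fσ hfσ.symm.dvd x
    rw [hu, RingHom.comp_assoc, RingHom.comp_assoc, ← lsMap_comp, ← lsMap_comp, hστ]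
  obtain ⟨Φ, hΦ⟩ := exists_ringHom_comp_algebraMap_eq_of_baseChange e u v huv
  have hroot := congrArg Φ (adjoinRoot_root_pow_sub_root p (HahnSeries.single (-1 : ℤ) α))
  refine exists_eq_intCast_mul_of_adjoinRoot_single ((map_ne_zero σ).2 hα)
    (z := Φ (AdjoinRoot.root f)) ?_
  rw [← map_pow, ← map_sub, hroot, ← lsMap_single τ]
  exact RingHom.congr_fun hΦ _

end Descent

theorem artinSchreier_not_induced_by_any_degree_p_general
    {p : ℕ} (hp : p.Prime) {k₁ k₂ : Type*} [CommRing k₁] [Field k₂] [CharP k₂ p] [Algebra k₁ k₂]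
    {α : k₂} (hα : Transcendental k₁ α) :
    letI : Algebra (LaurentSeries k₁) (LaurentSeries k₂) :=
      (lsMap (algebraMap k₁ k₂)).toAlgebra
    letI f := artinSchreierPoly p (HahnSeries.single (-1 : ℤ) α)
    Irreducible f ∧
    (∀ [Fact (Irreducible f)], IsGalois (LaurentSeries k₂) (AdjoinRoot f) ∧
      Module.finrank (LaurentSeries k₂) (AdjoinRoot f) = p) ∧
    ∀ (E₁ : Type*) [Semiring E₁] [Algebra (LaurentSeries k₁) E₁],
      IsEmpty ((E₁ ⊗[LaurentSeries k₁] LaurentSeries k₂) ≃ₐ[LaurentSeries k₂] AdjoinRoot f) := by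
  have : Fact p.Prime := ⟨hp⟩
  have := charP_laurentSeries k₂ p
  have : Nontrivial k₁ := (algebraMap k₁ k₂).domain_nontrivial
  have hα₀ : α ≠ 0 := fun h ↦ hα (h ▸ isAlgebraic_zero)
  refine ⟨irreducible_artinSchreierPoly fun _ h ↦
      hα₀ (eq_zero_of_pow_sub_eq_single_neg_one hp.two_le h),
    ⟨isGalois_adjoinRoot_artinSchreierPoly, finrank_adjoinRoot_artinSchreierPoly hp.one_lt _⟩,
    fun E₁ _ _ ↦ ⟨fun e ↦ ?_⟩⟩
  obtain ⟨K, _, σ, τ, hστ, hshift⟩ := exists_embeddings_apply_eq_add_one hα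
  have : CharP K p := charP_of_injective_ringHom σ.injective p
  obtain ⟨n, hn⟩ := exists_eq_intCast_mul_of_baseChange hα₀ hστ e
  refine ne_intCast_mul_add_one_of_transcendental hα n (τ.injective ?_)
  rw [hn, hshift, map_mul, map_intCast, map_add, map_one]

/-- Artin–Schreier extensions of `k₂((t))` given by `Y^p - Y - α/t` with
`α ∈ k₂` transcendental over `k₁` do not descend to any degree `p` extension of
`k₁((t))`. -/
theorem artinSchreier_not_induced_by_any_degree_p
    (p : ℕ) (hp : p.Prime) (k₁ k₂ : Type) [Field k₁] [Field k₂] [CharP k₁ p] [CharP k₂ p]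
    [Algebra k₁ k₂] [Algebra.IsSeparable k₁ (algebraicClosure k₁ k₂)]
    (α : k₂) (hα : Transcendental k₁ α) :
    letI : Algebra (LaurentSeries k₁) (LaurentSeries k₂) :=
      (lsMap (algebraMap k₁ k₂)).toAlgebra
    Irreducible (X ^ p - X - C (HahnSeries.single (-1 : ℤ) α) :
        Polynomial (LaurentSeries k₂)) ∧
    (∀ [Fact (Irreducible (X ^ p - X - C (HahnSeries.single (-1 : ℤ) α) :
        Polynomial (LaurentSeries k₂)))],
      IsGalois (LaurentSeries k₂)
        (AdjoinRoot (X ^ p - X - C (HahnSeries.single (-1 : ℤ) α) :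
          Polynomial (LaurentSeries k₂))) ∧
      Module.finrank (LaurentSeries k₂)
        (AdjoinRoot (X ^ p - X - C (HahnSeries.single (-1 : ℤ) α) :
          Polynomial (LaurentSeries k₂))) = p) ∧
    ¬ ∃ (E₁ : Type) (_ : Field E₁) (_ : Algebra (LaurentSeries k₁) E₁),
        Module.finrank (LaurentSeries k₁) E₁ = p ∧
        Nonempty ((E₁ ⊗[LaurentSeries k₁] LaurentSeries k₂) ≃ₐ[LaurentSeries k₂]
          AdjoinRoot (X ^ p - X - C (HahnSeries.single (-1 : ℤ) α) :
            Polynomial (LaurentSeries k₂))) := by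
  obtain ⟨hirr, hgalois, hdescent⟩ := artinSchreier_not_induced_by_any_degree_p_general hp hα
  exact ⟨hirr, hgalois, fun ⟨E₁, _, _, _, ⟨e⟩⟩ ↦ (hdescent E₁).false e⟩
end

section
/- Let L ⊆ M be a field extension with L separably closed in M (every element of M separable algebraic over L lies in the image of L). Let Ω be a separable closure of M and let L^sep be the separable closure of L in Ω. Let N be an intermediate field of Ω/M that is a finite Galois extension of M and is contained in the compositum of M and L^sep inside Ω. Then there exists an intermediate field E₀ of L^sep/L, finite over L with [E₀ : L] = [N : M], such that E₀ ⊗_L M is isomorphic to N as an M-algebra; equivalently, the compositum of E₀ and M inside Ω equals N and E₀ and M are linearly disjoint over L. -/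
open scoped TensorProduct

attribute [local instance] Algebra.TensorProduct.rightAlgebra

/-!
If `θ` is separable over `L`, the coefficients of its minimal polynomial over any extension of `L`
are polynomials in roots of its minimal polynomial over `L`, hence again separable over `L`. When
`L` is separably closed in `M` these minimal polynomials over `L` and `M` therefore agree, so every
separable extension of `L` in `Ω` is linearly disjoint from `M`. On the other hand, each element
of `N` lies in some `M(θ)` with `θ ∈ L^sep`, and the argument of Steinitz shows that `N ∩ M(θ)` is
generated over `M` by the coefficients of the minimal polynomial of `θ` over it. Thus `N` is the
compositum of `M` and `N ∩ L^sep`, and `E₀ = N ∩ L^sep` works.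
-/

section Compositum

open IntermediateField Polynomial

variable {L M Ω : Type*} [Field L] [Field M] [Field Ω] [Algebra L M]

theorem isSeparable_coeff_of_monic_of_dvd_map {p : M[X]} {q : L[X]} (hp : p.Monic)
    (hq : q.Separable) (hpq : p ∣ q.map (algebraMap L M)) (n : ℕ) :
    IsSeparable L (p.coeff n) := by
  let K := AlgebraicClosure M
  have roots_separable : ∀ a ∈ (p.map (algebraMap M K)).roots,
      a ∈ (algebraMap (separableClosure L K) K).range := by
    intro a ha
    have hqa : aeval a q = 0 := by
      rw [← aeval_map_algebraMap M]
      exact aeval_eq_zero_of_dvd_aeval_eq_zero hpq (mem_aroots.1 ha).2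
    exact ⟨⟨a, hq.of_dvd (minpoly.dvd L a hqa)⟩, rfl⟩
  have hlift : p.map (algebraMap M K) ∈ lifts (algebraMap (separableClosure L K) K) :=
    (IsAlgClosed.splits _).mem_lift_of_roots_mem_range (hp.map _) _ roots_separable
  obtain ⟨y, hy⟩ := (lifts_iff_coeff_lifts _).1 hlift n
  rw [← isSeparable_map_iff (IsScalarTower.toAlgHom L M K) (algebraMap M K).injective]
  have : algebraMap M K (p.coeff n) = y := by rw [← coeff_map, ← hy]; rfl
  rw [IsScalarTower.coe_toAlgHom', this]
  exact y.2

variable [Algebra M Ω] [Algebra L Ω] [IsScalarTower L M Ω]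

theorem isSeparable_coeff_minpoly {x : Ω} (hx : IsSeparable L x) (n : ℕ) :
    IsSeparable L ((minpoly M x).coeff n) :=
  isSeparable_coeff_of_monic_of_dvd_map (minpoly.monic hx.isIntegral.tower_top) hx
    (minpoly.dvd_map_of_isScalarTower L M x) n

theorem map_minpoly_of_separableClosure_eq_bot (h : separableClosure L M = ⊥) {x : Ω}
    (hx : IsSeparable L x) : (minpoly L x).map (algebraMap L M) = minpoly M x :=
  minpoly.map_algebraMap hx.isIntegral <| (lifts_iff_coeff_lifts _).2 fun n ↦
    mem_bot.1 (h.le (isSeparable_coeff_minpoly hx n))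

theorem linearDisjoint_adjoin_simple_of_separableClosure_eq_bot (h : separableClosure L M = ⊥)
    {x : Ω} (hx : IsSeparable L x) : L⟮x⟯.LinearDisjoint M := by
  have hdeg : (minpoly L x).natDegree = (minpoly M x).natDegree := by
    rw [← map_minpoly_of_separableClosure_eq_bot h hx, natDegree_map]
  refine .of_basis_left (adjoin.powerBasis hx.isIntegral).basis ?_
  convert! (linearIndependent_pow (K := M) x).comp (Fin.cast hdeg) (Fin.cast_injective hdeg)
    using 1
  ext i
  rw [Function.comp_apply, PowerBasis.basis_eq_pow, adjoin.powerBasis_gen]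
  rfl

theorem exists_isSeparable_adjoin_simple_eq (E : IntermediateField L M) [FiniteDimensional L E]
    [Algebra.IsSeparable L E] : ∃ x : M, IsSeparable L x ∧ L⟮x⟯ = E := by
  obtain ⟨x, hx⟩ := Field.exists_primitive_element L E
  refine ⟨x, le_separableClosure L M E x.2, ?_⟩
  simpa only [lift_adjoin_simple, lift_top] using congr_arg lift hx

theorem linearDisjoint_of_separableClosure_eq_bot (h : separableClosure L M = ⊥)
    (E : IntermediateField L Ω) [Algebra.IsSeparable L E] : E.LinearDisjoint M := by
  have : Algebra.IsIntegral L E.toSubalgebra := inferInstanceAs (Algebra.IsIntegral L E)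
  refine Subalgebra.LinearDisjoint.of_linearDisjoint_finite_left _ _ fun A hA _ ↦ ?_
  let F : IntermediateField L Ω := Algebra.IsAlgebraic.toIntermediateField A
  have : FiniteDimensional L F := ‹Module.Finite L A›
  have : Algebra.IsSeparable L F := .of_algHom L E (inclusion (E := F) hA)
  obtain ⟨x, hx, hF⟩ := exists_isSeparable_adjoin_simple_eq F
  have hdisj : F.LinearDisjoint M := by
    rw [← hF]
    exact linearDisjoint_adjoin_simple_of_separableClosure_eq_bot h hx
  exact hdisj

theorem exists_isSeparable_mem_adjoin_simple {x : Ω}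
    (hx : x ∈ adjoin M (separableClosure L Ω : Set Ω)) :
    ∃ θ : Ω, IsSeparable L θ ∧ x ∈ M⟮θ⟯ := by
  obtain ⟨T, hT, hxT⟩ := exists_finset_of_mem_adjoin hx
  have : FiniteDimensional L (adjoin L (T : Set Ω)) :=
    finiteDimensional_adjoin fun y hy ↦ (hT hy).isIntegral
  have : Algebra.IsSeparable L (adjoin L (T : Set Ω)) :=
    (isSeparable_adjoin_iff_isSeparable L Ω).2 fun y hy ↦ hT hy
  obtain ⟨θ, hθ, hθT⟩ := exists_isSeparable_adjoin_simple_eq (adjoin L (T : Set Ω))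
  refine ⟨θ, hθ, ?_⟩
  have hle : L⟮θ⟯ ≤ M⟮θ⟯.restrictScalars L :=
    adjoin_simple_le_iff.2 (mem_adjoin_simple_self M θ)
  have hTθ : (T : Set Ω) ⊆ M⟮θ⟯ := (subset_adjoin L _).trans (hθT.ge.trans hle)
  exact adjoin_le_iff.2 hTθ hxT

theorem le_adjoin_inter_separableClosure_of_adjoin_simple_eq_top {θ : Ω} (hθ : IsSeparable L θ)
    (htop : M⟮θ⟯ = ⊤) (K : IntermediateField M Ω) :
    K ≤ adjoin M ((K : Set Ω) ∩ separableClosure L Ω) := by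
  have : FiniteDimensional M Ω := by
    have := adjoin.finiteDimensional (K := M) hθ.isIntegral.tower_top
    rw [htop] at this
    exact topEquiv.toLinearEquiv.finiteDimensional
  conv_lhs => rw [← adjoin_minpoly_coeff_of_exists_primitive_element M htop K]
  refine adjoin.mono _ _ _ fun c hc ↦ ?_
  obtain ⟨n, -, rfl⟩ := mem_coeffs_iff.1 hc
  rw [coeff_map]
  have : IsScalarTower L K Ω := .to₁₃₄ L M K Ω
  have : IsSeparable L ((minpoly K θ).coeff n) := isSeparable_coeff_minpoly hθ n
  exact ⟨Subtype.property _, this.map (IsScalarTower.toAlgHom L K Ω) (algebraMap K Ω).injective⟩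

theorem adjoin_inf_separableClosure_eq {N : IntermediateField M Ω}
    (hN : N ≤ adjoin M (separableClosure L Ω : Set Ω)) :
    adjoin M ((N.restrictScalars L ⊓ separableClosure L Ω : IntermediateField L Ω) : Set Ω) =
      N := by
  refine le_antisymm (adjoin_le_iff.2 inf_le_left) fun x hx ↦ ?_
  obtain ⟨θ, hθ, hxθ⟩ := exists_isSeparable_mem_adjoin_simple (hN hx)
  have htop : M⟮AdjoinSimple.gen M θ⟯ = ⊤ := by
    apply lift_injective
    rw [lift_adjoin_simple, lift_top, AdjoinSimple.coe_gen]
  have hgen : IsSeparable L (AdjoinSimple.gen M θ) := by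
    rwa [← isSeparable_map_iff (M⟮θ⟯.val.restrictScalars L) M⟮θ⟯.val.injective]
  let K : IntermediateField M M⟮θ⟯ := N.comap M⟮θ⟯.val
  have hle := le_adjoin_inter_separableClosure_of_adjoin_simple_eq_top hgen htop K
  have hx_lift : x ∈ lift (adjoin M ((K : Set M⟮θ⟯) ∩ separableClosure L M⟮θ⟯)) :=
    (mem_lift (⟨x, hxθ⟩ : M⟮θ⟯)).2 (hle hx)
  rw [lift_adjoin] at hx_lift
  refine adjoin.mono _ _ _ ?_ hx_lift
  rintro _ ⟨y, ⟨hyN, hyL⟩, rfl⟩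
  have hy : IsSeparable L y := hyL
  exact ⟨hyN, hy.map (M⟮θ⟯.val.restrictScalars L) M⟮θ⟯.val.injective⟩

theorem range_productLeftAlgHom_ofId_val (E : IntermediateField L Ω) :
    (Algebra.TensorProduct.productLeftAlgHom (Algebra.ofId M Ω) E.val).range =
      Algebra.adjoin M (E : Set Ω) := by
  rw [← Algebra.map_top,
    ← Algebra.TensorProduct.adjoin_one_tmul_image_eq_top _ (Algebra.adjoin_univ L E),
    AlgHom.map_adjoin]
  congr 1
  ext x
  simp

theorem injective_productLeftAlgHom_ofId_val {E : IntermediateField L Ω}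
    [Algebra.IsAlgebraic L E] (hE : E.LinearDisjoint M) :
    Function.Injective (Algebra.TensorProduct.productLeftAlgHom (Algebra.ofId M Ω) E.val) := by
  have hfield : IsField (M ⊗[L] E) :=
    (Algebra.TensorProduct.commRight L M E).toMulEquiv.isField
      (hE.isField_of_isAlgebraic (.inl inferInstance))
  have : IsSimpleRing (M ⊗[L] E) := (isSimpleRing_iff_isField (M ⊗[L] E)).2 hfield
  exact RingHom.injective (R := M ⊗[L] E)
    (Algebra.TensorProduct.productLeftAlgHom (Algebra.ofId M Ω) E.val).toRingHom

/-- The base change to `M` of an algebraic extension `E / L` linearly disjoint from `M`, identified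
with the compositum of `M` and `E`. The tensor product is an `M`-algebra through its right
factor. -/
noncomputable def tensorEquivAdjoin {E : IntermediateField L Ω}
    [Algebra.IsAlgebraic L E] (hE : E.LinearDisjoint M) :
    (E ⊗[L] M) ≃ₐ[M] adjoin M (E : Set Ω) :=
  have hrange := (range_productLeftAlgHom_ofId_val E).trans
    (adjoin_intermediateField_toSubalgebra_of_isAlgebraic M E (.inr inferInstance)).symm
  (Algebra.TensorProduct.commRight L M E).symm.trans <|
    (AlgEquiv.ofInjective _ (injective_productLeftAlgHom_ofId_val hE)).trans <|
      Subalgebra.equivOfEq _ _ hrange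

end Compositum

open IntermediateField in
theorem descent_of_finite_galois_in_compositum_general {L M Ω : Type*} [Field L] [Field M]
    [Field Ω] [Algebra L M] [Algebra M Ω] [Algebra L Ω] [IsScalarTower L M Ω]
    (h : separableClosure L M = ⊥) (N : IntermediateField M Ω)
    (hN : N ≤ adjoin M (separableClosure L Ω : Set Ω)) :
    ∃ E₀ : IntermediateField L (separableClosure L Ω),
      Module.rank L E₀ = Module.rank M N ∧ Nonempty ((E₀ ⊗[L] M) ≃ₐ[M] N) := by
  let E : IntermediateField L Ω := N.restrictScalars L ⊓ separableClosure L Ω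
  have hE : E ≤ separableClosure L Ω := inf_le_right
  have : Algebra.IsSeparable L E := (le_separableClosure_iff L Ω E).1 hE
  have hdisj : E.LinearDisjoint M := linearDisjoint_of_separableClosure_eq_bot h E
  have hadj : adjoin M (E : Set Ω) = N := adjoin_inf_separableClosure_eq hN
  let e : E ≃ₐ[L] restrict hE := restrictAlgEquiv hE
  refine ⟨restrict hE, ?_, ?_⟩
  · rw [← e.toLinearEquiv.rank_eq, ← hdisj.adjoin_rank_eq_rank_left_of_isAlgebraic_left, hadj]
  · let f : (restrict hE ⊗[L] M) ≃ₐ[M] (E ⊗[L] M) :=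
      .ofRingEquiv (f := (Algebra.TensorProduct.congr e.symm .refl).toRingEquiv) fun m ↦ by
        simp [Algebra.TensorProduct.right_algebraMap_apply]
    exact ⟨f.trans <| (tensorEquivAdjoin hdisj).trans <| equivOfEq hadj⟩

/-- If `L` is separably closed in `M`, `Ω` is a separable closure of `M`, and `N/M` is a
finite Galois subextension of `Ω/M` contained in the compositum of `M` and the separable
closure `L^sep` of `L` in `Ω`, then `N` descends to `L`: there is an intermediate field
`E₀` of `L^sep/L`, finite of degree `[N : M]` over `L`, with `E₀ ⊗_L M ≅ N` as
`M`-algebras. -/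
theorem descent_of_finite_galois_in_compositum
    (L M Ω : Type) [Field L] [Field M] [Field Ω]
    [Algebra L M] [Algebra M Ω] [Algebra L Ω] [IsScalarTower L M Ω]
    [IsSepClosure M Ω]
    (hsc : ∀ x : M, IsAlgebraic L x → IsSeparable L x → x ∈ (algebraMap L M).range)
    (N : IntermediateField M Ω) [FiniteDimensional M N] [IsGalois M N]
    (hN : N ≤ IntermediateField.adjoin M (separableClosure L Ω : Set Ω)) :
    ∃ E₀ : IntermediateField L (separableClosure L Ω),
      FiniteDimensional L E₀ ∧
      Module.finrank L E₀ = Module.finrank M N ∧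
      Nonempty ((E₀ ⊗[L] M) ≃ₐ[M] N) := by
  obtain ⟨E₀, hrank, hE₀⟩ := descent_of_finite_galois_in_compositum_general
    (eq_bot_iff.2 fun x hx ↦ IntermediateField.mem_bot.2 (hsc x hx.isIntegral.isAlgebraic hx)) N hN
  exact ⟨E₀, Module.rank_lt_aleph0_iff.1 (hrank.trans_lt (Module.rank_lt_aleph0 M N)),
    congr_arg Cardinal.toNat hrank, hE₀⟩
end
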